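/- Let G(t,x) = (1/N) log ∫ exp( h(σ) + t N ξ(σσᵀ/N) + x·(σσᵀ) ) dP(σ) for (t,x) ∈ ℝ × S^D. Assume in addition that the restriction of ξ to the set of symmetric positive semidefinite matrices is convex, and that ξ is L-Lipschitz (Frobenius norm) on the set of symmetric positive semidefinite matrices a with |a| ≤ 1. Then at every (t,x) ∈ ℝ × S^D: 0 ≤ ∂_t G(t,x) − ξ( ∇_x G(t,x) ) ≤ L ( N^{-1} Δ_x G(t,x) )^{1/2}, where ∇_x G(t,x) is the gradient of G(t,·) at x with respect to the Frobenius inner product on S^D and Δ_x G(t,x) is the sum over an orthonormal basis (e_i) of S^D of the second derivatives of G(t,·) at x along the directions e_i. -/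

import Mathlib

open Matrix MeasureTheory

noncomputable section

instance {m n : Type*} : MeasurableSpace (Matrix m n ℝ) := MeasurableSpace.pi

/-- The energy `h(σ) + t N ξ(σσᵀ/N) + x·(σσᵀ)`, where `x·m = tr(x mᵀ)` is the
Frobenius inner product. -/
def energy {D N : ℕ} (h : Matrix (Fin D) (Fin N) ℝ → ℝ)
    (ξ : Matrix (Fin D) (Fin D) ℝ → ℝ)
    (t : ℝ) (x : Matrix (Fin D) (Fin D) ℝ) (σ : Matrix (Fin D) (Fin N) ℝ) : ℝ :=
  h σ + t * N * ξ ((N : ℝ)⁻¹ • (σ * σᵀ)) + (x * (σ * σᵀ)ᵀ).trace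

/-- The free energy `G(t,x) = (1/N) log ∫ exp(h(σ) + t N ξ(σσᵀ/N) + x·(σσᵀ)) dP(σ)`. -/
def freeEnergy {D N : ℕ} (P : Measure (Matrix (Fin D) (Fin N) ℝ))
    (h : Matrix (Fin D) (Fin N) ℝ → ℝ) (ξ : Matrix (Fin D) (Fin D) ℝ → ℝ)
    (t : ℝ) (x : Matrix (Fin D) (Fin D) ℝ) : ℝ :=
  (N : ℝ)⁻¹ * Real.log (∫ σ, Real.exp (energy h ξ t x σ) ∂P)

/-- The Gibbs average `⟨f⟩_{t,x}`. -/
def gibbs {D N : ℕ} (P : Measure (Matrix (Fin D) (Fin N) ℝ))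
    (h : Matrix (Fin D) (Fin N) ℝ → ℝ) (ξ : Matrix (Fin D) (Fin D) ℝ → ℝ)
    (t : ℝ) (x : Matrix (Fin D) (Fin D) ℝ)
    (f : Matrix (Fin D) (Fin N) ℝ → ℝ) : ℝ :=
  (∫ σ, f σ * Real.exp (energy h ξ t x σ) ∂P) / (∫ σ, Real.exp (energy h ξ t x σ) ∂P)

end

/-!
Write `R(σ) = σσᵀ/N` and `⟨·⟩` for the Gibbs average at `(t, x)`. The exponent is affine in `t` and
in `x`, with slopes `N ξ(R)` and `N R`, so that `∂_t G = ⟨ξ(R)⟩` and `∇_x G = ⟨R⟩`, and the defect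
`∂_t G - ξ(∇_x G)` is the Jensen gap `⟨ξ(R)⟩ - ξ(⟨R⟩)`. It is nonnegative by convexity, and the
Lipschitz bound gives at most `L ⟨|R - ⟨R⟩|⟩ ≤ L ⟨|R - ⟨R⟩|²⟩^{1/2}`. Second derivatives of a
log-Laplace transform are variances, and `R - ⟨R⟩` is symmetric, so Parseval in `S^D` identifies
`⟨|R - ⟨R⟩|²⟩` with `N⁻¹ Δ_x G`.
-/

open ProbabilityTheory
open scoped ENNReal

section LogLaplace

variable {Ω : Type*} [MeasurableSpace Ω] {μ : Measure Ω} {U f : Ω → ℝ}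

theorem memLp_top_of_absolutelyContinuous {E : Type*} [NormedAddCommGroup E] {X : Ω → E}
    {ν : Measure Ω} (hνμ : ν ≪ μ) (hX : MemLp X ∞ μ) : MemLp X ∞ ν := by
  refine ⟨hX.aestronglyMeasurable.mono_ac hνμ, ?_⟩
  have hXtop := hX.eLpNorm_lt_top
  rw [eLpNorm_exponent_top] at hXtop ⊢
  exact (eLpNormEssSup_mono_measure X hνμ).trans_lt hXtop

theorem integrable_exp_add_of_memLp_top (hU : Integrable (fun ω ↦ Real.exp (U ω)) μ)
    (hf : MemLp f ∞ μ) : Integrable (fun ω ↦ Real.exp (U ω + f ω)) μ := by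
  simp only [Real.exp_add]
  refine hU.mul_bdd (c := Real.exp (lpNorm f ∞ μ))
    (Real.continuous_exp.comp_aestronglyMeasurable hf.aestronglyMeasurable) ?_
  filter_upwards [ae_le_lpNorm_exponent_top hf] with ω hω
  rw [Real.norm_eq_abs, Real.abs_exp]
  exact Real.exp_le_exp.mpr ((le_abs_self _).trans hω)

theorem integrableExpSet_eq_univ_of_memLp_top [IsFiniteMeasure μ] (hf : MemLp f ∞ μ) :
    integrableExpSet f μ = Set.univ := by
  refine Set.eq_univ_of_forall fun s ↦ ?_
  simpa [integrableExpSet] using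
    integrable_exp_add_of_memLp_top (U := 0) (by simp) (hf.const_mul s)

theorem log_integral_exp_add_mul [NeZero μ] (hU : Integrable (fun ω ↦ Real.exp (U ω)) μ)
    (hf : MemLp f ∞ μ) (s : ℝ) :
    Real.log (∫ ω, Real.exp (U ω + s * f ω) ∂μ)
      = Real.log (∫ ω, Real.exp (U ω) ∂μ) + cgf f (μ.tilted U) s := by
  have hZ := integral_exp_pos hU
  have hZs := integral_exp_pos (integrable_exp_add_of_memLp_top hU (hf.const_mul s))
  rw [cgf, mgf, integral_exp_tilted, Real.log_div (by exact hZs.ne') hZ.ne']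
  simp

theorem hasDerivAt_log_integral_exp_add_mul [NeZero μ]
    (hU : Integrable (fun ω ↦ Real.exp (U ω)) μ) (hf : MemLp f ∞ μ) :
    HasDerivAt (fun s ↦ Real.log (∫ ω, Real.exp (U ω + s * f ω) ∂μ))
      (∫ ω, f ω ∂μ.tilted U) 0 := by
  have := isProbabilityMeasure_tilted hU
  have h0 : (0 : ℝ) ∈ interior (integrableExpSet f (μ.tilted U)) := by
    simp [integrableExpSet_eq_univ_of_memLp_top
      (memLp_top_of_absolutelyContinuous (tilted_absolutelyContinuous μ U) hf)]
  have h := (analyticAt_cgf h0).differentiableAt.hasDerivAt.const_add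
    (Real.log (∫ ω, Real.exp (U ω) ∂μ))
  simpa [log_integral_exp_add_mul hU hf, deriv_cgf_zero h0] using h

theorem deriv_deriv_log_integral_exp_add_mul [NeZero μ]
    (hU : Integrable (fun ω ↦ Real.exp (U ω)) μ) (hf : MemLp f ∞ μ) :
    deriv (deriv fun s ↦ Real.log (∫ ω, Real.exp (U ω + s * f ω) ∂μ)) 0
      = Var[f; μ.tilted U] := by
  have := isProbabilityMeasure_tilted hU
  have h0 : (0 : ℝ) ∈ interior (integrableExpSet f (μ.tilted U)) := by
    simp [integrableExpSet_eq_univ_of_memLp_top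
      (memLp_top_of_absolutelyContinuous (tilted_absolutelyContinuous μ U) hf)]
  have hvar := variance_tilted_mul h0
  simp only [zero_mul, tilted_const, iteratedDeriv_succ, iteratedDeriv_zero] at hvar
  simp only [log_integral_exp_add_mul hU hf, deriv_const_add', hvar]

end LogLaplace

section JensenGap

variable {Ω : Type*} [MeasurableSpace Ω] {μ : Measure Ω}
  {E : Type*} [NormedAddCommGroup E] {X : Ω → E} {s : Set E} {φ : E → ℝ}

theorem memLp_top_comp_of_lipschitzOnWith {K : NNReal} (hφ : LipschitzOnWith K φ s)
    (hX : MemLp X ∞ μ) (hs : ∀ᵐ ω ∂μ, X ω ∈ s) : MemLp (fun ω ↦ φ (X ω)) ∞ μ := by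
  obtain ⟨ψ, hψ, hφψ⟩ := hφ.extend_real
  have hψX : MemLp (fun ω ↦ ψ (X ω) - ψ 0) ∞ μ :=
    (hψ.sub (LipschitzWith.const (ψ 0))).comp_memLp (sub_self _) hX
  refine (memLp_congr_ae ?_).mpr (hψX.add (memLp_top_const (ψ 0)))
  filter_upwards [hs] with ω hω
  simp [hφψ hω]

theorem integral_norm_le_sqrt_integral_norm_sq [IsProbabilityMeasure μ] (hX : MemLp X 2 μ) :
    ∫ ω, ‖X ω‖ ∂μ ≤ √(∫ ω, ‖X ω‖ ^ 2 ∂μ) := by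
  refine Real.le_sqrt_of_sq_le (sub_nonneg.mp ?_)
  exact (variance_nonneg (fun ω ↦ ‖X ω‖) μ).trans_eq (variance_eq_sub hX.norm)

theorem integral_comp_sub_le_mul_sqrt [IsProbabilityMeasure μ] {L : ℝ}
    (hφ : ∀ a ∈ s, ∀ b ∈ s, |φ a - φ b| ≤ L * ‖a - b‖) (hX : MemLp X 2 μ)
    (hφX : Integrable (fun ω ↦ φ (X ω)) μ) (hs : ∀ᵐ ω ∂μ, X ω ∈ s) {c : E} (hc : c ∈ s) :
    (∫ ω, φ (X ω) ∂μ) - φ c ≤ L * √(∫ ω, ‖X ω - c‖ ^ 2 ∂μ) := by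
  have hY : MemLp (fun ω ↦ X ω - c) 2 μ := hX.sub (memLp_const c)
  have hgap : (∫ ω, φ (X ω) ∂μ) - φ c ≤ L * ∫ ω, ‖X ω - c‖ ∂μ :=
    calc (∫ ω, φ (X ω) ∂μ) - φ c = ∫ ω, (φ (X ω) - φ c) ∂μ := by
          simp [integral_sub hφX (integrable_const _)]
      _ ≤ ∫ ω, L * ‖X ω - c‖ ∂μ := by
          refine integral_mono_ae (hφX.sub (integrable_const _))
            ((hY.integrable one_le_two).norm.const_mul L) ?_
          filter_upwards [hs] with ω hω using (le_abs_self _).trans (hφ _ hω _ hc)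
      _ = L * ∫ ω, ‖X ω - c‖ ∂μ := integral_const_mul _ _
  rcases le_or_gt 0 L with hL | hL
  · exact hgap.trans (mul_le_mul_of_nonneg_left (integral_norm_le_sqrt_integral_norm_sq hY) hL)
  · -- a negative Lipschitz constant forces `s` to be a point, so that both sides vanish
    have hXc : ∀ᵐ ω ∂μ, ‖X ω - c‖ = 0 := by
      filter_upwards [hs] with ω hω
      nlinarith [hφ _ hω _ hc, abs_nonneg (φ (X ω) - φ c), norm_nonneg (X ω - c)]
    have hsq : ∫ ω, ‖X ω - c‖ ^ 2 ∂μ = 0 :=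
      integral_eq_zero_of_ae (hXc.mono fun ω hω ↦ by simp [hω])
    simpa [hsq, integral_eq_zero_of_ae hXc] using hgap

end JensenGap

section Variance

variable {ι H : Type*} [Fintype ι] [NormedAddCommGroup H] [InnerProductSpace ℝ H] {e : ι → H}

theorem sum_inner_sq_eq_norm_sq_of_mem_span (he : Orthonormal ℝ e) {z : H}
    (hz : z ∈ Submodule.span ℝ (Set.range e)) : ∑ i, inner ℝ (e i) z ^ 2 = ‖z‖ ^ 2 := by
  obtain ⟨c, rfl⟩ := (Submodule.mem_span_range_iff_exists_fun ℝ).mp hz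
  simp only [he.inner_right_fintype, ← real_inner_self_eq_norm_sq, he.inner_sum]
  simp [pow_two]

theorem sum_variance_inner_eq_integral_norm_sub_sq [CompleteSpace H] {Ω : Type*}
    [MeasurableSpace Ω] {μ : Measure Ω} [IsFiniteMeasure μ] (he : Orthonormal ℝ e) {X : Ω → H}
    (hX : MemLp X 2 μ) (hspan : ∀ᵐ ω ∂μ, X ω - μ[X] ∈ Submodule.span ℝ (Set.range e)) :
    ∑ i, Var[fun ω ↦ inner ℝ (e i) (X ω); μ] = ∫ ω, ‖X ω - μ[X]‖ ^ 2 ∂μ := by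
  have hXi : Integrable X μ := hX.integrable one_le_two
  have hY : MemLp (fun ω ↦ X ω - μ[X]) 2 μ := hX.sub (memLp_const _)
  have hvar (i : ι) : Var[fun ω ↦ inner ℝ (e i) (X ω); μ]
      = ∫ ω, inner ℝ (e i) (X ω - μ[X]) ^ 2 ∂μ := by
    rw [variance_eq_integral (hX.const_inner (e i)).aestronglyMeasurable.aemeasurable]
    simp only [integral_inner hXi, inner_sub_right]
  simp only [hvar]
  rw [← integral_finsetSum _ fun i _ ↦ (hY.const_inner (e i)).integrable_sq]
  refine integral_congr_ae ?_
  filter_upwards [hspan] with ω hω using sum_inner_sq_eq_norm_sq_of_mem_span he hω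

end Variance

theorem isClosed_setOf_posSemidef {n : Type*} [Finite n] :
    IsClosed {A : Matrix n n ℝ | A.PosSemidef} := by
  have := Fintype.ofFinite n
  have hset : {A : Matrix n n ℝ | A.PosSemidef}
      = {A | Aᴴ = A} ∩ ⋂ v : n → ℝ, {A | 0 ≤ star v ⬝ᵥ (A *ᵥ v)} := by
    ext A
    simp [posSemidef_iff_dotProduct_mulVec, IsHermitian]
  rw [hset]
  exact (isClosed_eq (by fun_prop) continuous_id).inter
    (isClosed_iInter fun v ↦ isClosed_le continuous_const (by fun_prop))

theorem convex_setOf_posSemidef {n : Type*} :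
    Convex ℝ {A : Matrix n n ℝ | A.PosSemidef} :=
  fun _ hA _ hB _ _ ha hb _ ↦ (hA.smul ha).add (hB.smul hb)

section Overlap

variable {D N : ℕ}

variable (D) in
/-- The positive semidefinite matrices `a` with Frobenius norm `|a| ≤ 1`, on which the convexity and
the Lipschitz bound of `ξ` are used. The norm is written out as a trace so that the definition does
not depend on a choice of matrix norm. -/
def psdUnitBall : Set (Matrix (Fin D) (Fin D) ℝ) := {a | a.PosSemidef ∧ √((a * aᵀ).trace) ≤ 1}

theorem isSymm_of_mem_psdUnitBall {a : Matrix (Fin D) (Fin D) ℝ} (ha : a ∈ psdUnitBall D) :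
    a.IsSymm :=
  isHermitian_iff_isSymm.mp ha.1.isHermitian

/-- The normalized self-overlap `R(σ) = σσᵀ/N`. -/
noncomputable def overlap (σ : Matrix (Fin D) (Fin N) ℝ) : Matrix (Fin D) (Fin D) ℝ :=
  (N : ℝ)⁻¹ • (σ * σᵀ)

theorem continuous_overlap : Continuous (overlap : Matrix (Fin D) (Fin N) ℝ → _) := by
  unfold overlap
  fun_prop

section FrobeniusInnerProduct

open scoped Matrix.Norms.Frobenius

/-- The Frobenius inner product `A · B = tr(A Bᵀ)`, as an inner product space structure compatible
with the Frobenius norm. Like the matrix norms of Mathlib it is not a global instance. -/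
noncomputable abbrev frobeniusInnerProductSpace (m n : Type*) [Fintype m] [Fintype n] :
    InnerProductSpace ℝ (Matrix m n ℝ) where
  inner A B := (A * Bᵀ).trace
  norm_sq_eq_re_inner A := by
    rw [frobenius_norm_def, ← Real.sqrt_eq_rpow, Real.sq_sqrt (by positivity)]
    simp [trace, mul_apply, pow_two]
  conj_inner_symm A B := by simp [← trace_transpose (A * Bᵀ)]
  add_left A B C := by simp [Matrix.add_mul]
  smul_left A B r := by simp

attribute [local instance] frobeniusInnerProductSpace

-- The entrywise topology on matrices is definitionally the Frobenius one, but instance search must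
-- find the latter for lemmas about normed spaces to apply.
noncomputable local instance {m n : Type*} [Fintype m] [Fintype n] :
    UniformSpace (Matrix m n ℝ) := PseudoMetricSpace.toUniformSpace

noncomputable local instance {m n : Type*} [Fintype m] [Fintype n] :
    TopologicalSpace (Matrix m n ℝ) := UniformSpace.toTopologicalSpace

local instance {m n : Type*} [Fintype m] [Fintype n] : BorelSpace (Matrix m n ℝ) :=
  inferInstanceAs (BorelSpace (m → n → ℝ))

local instance {m n : Type*} [Fintype m] [Fintype n] : SecondCountableTopology (Matrix m n ℝ) :=
  inferInstanceAs (SecondCountableTopology (m → n → ℝ))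

local instance {m n : Type*} [Fintype m] [Fintype n] : CompleteSpace (Matrix m n ℝ) :=
  inferInstanceAs (CompleteSpace (m → n → ℝ))

theorem inner_eq_trace {m n : Type*} [Fintype m] [Fintype n] (A B : Matrix m n ℝ) :
    inner ℝ A B = (A * Bᵀ).trace := rfl

theorem frobenius_norm_eq_sqrt_trace {m n : Type*} [Fintype m] [Fintype n] (A : Matrix m n ℝ) :
    ‖A‖ = √((A * Aᵀ).trace) := norm_eq_sqrt_real_inner A

theorem psdUnitBall_eq_inter : psdUnitBall D = {a | a.PosSemidef} ∩ Metric.closedBall 0 1 := by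
  ext a
  simp [psdUnitBall, frobenius_norm_eq_sqrt_trace]

theorem isClosed_psdUnitBall : IsClosed (psdUnitBall D) :=
  psdUnitBall_eq_inter ▸ isClosed_setOf_posSemidef.inter Metric.isClosed_closedBall

theorem convex_psdUnitBall : Convex ℝ (psdUnitBall D) :=
  psdUnitBall_eq_inter ▸ convex_setOf_posSemidef.inter (convex_closedBall 0 1)

theorem frobenius_norm_sq_le_of_col_le {σ : Matrix (Fin D) (Fin N) ℝ}
    (hσ : ∀ j, ∑ i, σ i j ^ 2 ≤ 1) : ‖σ‖ ^ 2 ≤ N := by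
  rw [← real_inner_self_eq_norm_sq, inner_eq_trace, trace_mul_comm]
  calc (σᵀ * σ).trace = ∑ j, ∑ i, σ i j ^ 2 := by simp [trace, mul_apply, pow_two]
    _ ≤ ∑ _j : Fin N, 1 := Finset.sum_le_sum fun j _ ↦ hσ j
    _ = N := by simp

theorem overlap_mem_psdUnitBall {σ : Matrix (Fin D) (Fin N) ℝ}
    (hσ : ∀ j, ∑ i, σ i j ^ 2 ≤ 1) : overlap σ ∈ psdUnitBall D := by
  refine ⟨(posSemidef_self_mul_conjTranspose σ).smul (by positivity), ?_⟩
  rw [← frobenius_norm_eq_sqrt_trace, overlap, norm_smul, norm_inv, RCLike.norm_natCast]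
  have hnorm : ‖σ * σᵀ‖ ≤ N :=
    calc ‖σ * σᵀ‖ ≤ ‖σ‖ * ‖σᵀ‖ := frobenius_norm_mul σ σᵀ
      _ = ‖σ‖ ^ 2 := by rw [frobenius_norm_transpose, pow_two]
      _ ≤ N := frobenius_norm_sq_le_of_col_le hσ
  exact inv_mul_le_one_of_le₀ hnorm (Nat.cast_nonneg N)

theorem measurable_overlap : Measurable (overlap : Matrix (Fin D) (Fin N) ℝ → _) :=
  have hcont : Continuous (overlap : Matrix (Fin D) (Fin N) ℝ → _) := continuous_overlap
  hcont.measurable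

theorem memLp_top_overlap {P : Measure (Matrix (Fin D) (Fin N) ℝ)}
    (hP : ∀ᵐ σ ∂P, overlap σ ∈ psdUnitBall D) :
    MemLp overlap ∞ P := by
  refine memLp_top_of_bound measurable_overlap.aestronglyMeasurable 1 ?_
  filter_upwards [hP] with σ hσ
  exact (frobenius_norm_eq_sqrt_trace _).trans_le hσ.2

variable {P : Measure (Matrix (Fin D) (Fin N) ℝ)} {h : Matrix (Fin D) (Fin N) ℝ → ℝ}
  {ξ : Matrix (Fin D) (Fin D) ℝ → ℝ}

theorem energy_eq_overlap [NeZero N] (t : ℝ) (x : Matrix (Fin D) (Fin D) ℝ)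
    (σ : Matrix (Fin D) (Fin N) ℝ) :
    energy h ξ t x σ = h σ + N * (t * ξ (overlap σ) + inner ℝ x (overlap σ)) := by
  have hN : (N : ℝ) ≠ 0 := NeZero.ne _
  simp only [energy, overlap, inner_eq_trace, transpose_smul, Matrix.mul_smul, trace_smul,
    smul_eq_mul]
  rw [mul_add, mul_inv_cancel_left₀ hN]
  ring

theorem energy_eq_add_time [NeZero N] (s t : ℝ) (x : Matrix (Fin D) (Fin D) ℝ)
    (σ : Matrix (Fin D) (Fin N) ℝ) :
    energy h ξ s x σ = energy h ξ t x σ + (s - t) * (N * ξ (overlap σ)) := by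
  simp only [energy_eq_overlap]
  ring

theorem energy_eq_add_space [NeZero N] (t ε : ℝ) (x y : Matrix (Fin D) (Fin D) ℝ)
    (σ : Matrix (Fin D) (Fin N) ℝ) :
    energy h ξ t (x + ε • y) σ = energy h ξ t x σ + ε * (N * inner ℝ y (overlap σ)) := by
  simp only [energy_eq_overlap, inner_add_left, real_inner_smul_left]
  ring

theorem integrable_exp_energy [NeZero N] (hh : Integrable (fun σ ↦ Real.exp (h σ)) P)
    (hξ : MemLp (fun σ ↦ ξ (overlap σ)) ∞ P) (hR : MemLp overlap ∞ P) (t : ℝ)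
    (x : Matrix (Fin D) (Fin D) ℝ) : Integrable (fun σ ↦ Real.exp (energy h ξ t x σ)) P := by
  simp only [energy_eq_overlap]
  exact integrable_exp_add_of_memLp_top hh
    (((hξ.const_mul t).add (hR.const_inner x)).const_mul (N : ℝ))

/-- The Gibbs measure at `(t, x)`, encoded as an exponential tilting of `P`; integration against it
is the Gibbs average `gibbs`. -/
noncomputable def gibbsMeasure (P : Measure (Matrix (Fin D) (Fin N) ℝ))
    (h : Matrix (Fin D) (Fin N) ℝ → ℝ) (ξ : Matrix (Fin D) (Fin D) ℝ → ℝ) (t : ℝ)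
    (x : Matrix (Fin D) (Fin D) ℝ) : Measure (Matrix (Fin D) (Fin N) ℝ) :=
  P.tilted (energy h ξ t x)

theorem gibbsMeasure_absolutelyContinuous (t : ℝ) (x : Matrix (Fin D) (Fin D) ℝ) :
    gibbsMeasure P h ξ t x ≪ P :=
  tilted_absolutelyContinuous P (energy h ξ t x)

theorem isProbabilityMeasure_gibbsMeasure [NeZero P] {t : ℝ} {x : Matrix (Fin D) (Fin D) ℝ}
    (hE : Integrable (fun σ ↦ Real.exp (energy h ξ t x σ)) P) :
    IsProbabilityMeasure (gibbsMeasure P h ξ t x) :=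
  isProbabilityMeasure_tilted hE

theorem integral_overlap_mem_psdUnitBall [NeZero P] {t : ℝ} {x : Matrix (Fin D) (Fin D) ℝ}
    (hE : Integrable (fun σ ↦ Real.exp (energy h ξ t x σ)) P)
    (hP : ∀ᵐ σ ∂P, overlap σ ∈ psdUnitBall D) :
    ∫ σ, overlap σ ∂gibbsMeasure P h ξ t x ∈ psdUnitBall D := by
  have := isProbabilityMeasure_gibbsMeasure hE
  have hQ := (gibbsMeasure_absolutelyContinuous (h := h) (ξ := ξ) t x).ae_le hP
  have hRQ := memLp_top_overlap hQ
  exact convex_psdUnitBall.integral_mem isClosed_psdUnitBall hQ (hRQ.integrable le_top)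

section Derivatives

variable [NeZero N] [NeZero P] {t : ℝ} {x : Matrix (Fin D) (Fin D) ℝ}

theorem hasDerivAt_freeEnergy_time (hE : Integrable (fun σ ↦ Real.exp (energy h ξ t x σ)) P)
    (hξ : MemLp (fun σ ↦ ξ (overlap σ)) ∞ P) :
    HasDerivAt (fun s ↦ freeEnergy P h ξ s x) (∫ σ, ξ (overlap σ) ∂gibbsMeasure P h ξ t x) t := by
  have hN : (N : ℝ) ≠ 0 := NeZero.ne _
  have hfree (s : ℝ) : freeEnergy P h ξ s x = (N : ℝ)⁻¹ * Real.log
      (∫ σ, Real.exp (energy h ξ t x σ + (s - t) * (N * ξ (overlap σ))) ∂P) := by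
    simp only [freeEnergy, energy_eq_add_time s t]
  have hlog := hasDerivAt_log_integral_exp_add_mul hE (hξ.const_mul (N : ℝ))
  rw [← sub_self t] at hlog
  have hG := (hlog.comp_sub_const t t).const_mul (N : ℝ)⁻¹
  rw [integral_const_mul, inv_mul_cancel_left₀ hN] at hG
  simpa only [hfree, gibbsMeasure] using hG

theorem hasDerivAt_freeEnergy_space (hE : Integrable (fun σ ↦ Real.exp (energy h ξ t x σ)) P)
    (hR : MemLp overlap ∞ P) (y : Matrix (Fin D) (Fin D) ℝ) :
    HasDerivAt (fun ε : ℝ ↦ freeEnergy P h ξ t (x + ε • y))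
      (∫ σ, inner ℝ y (overlap σ) ∂gibbsMeasure P h ξ t x) 0 := by
  have hN : (N : ℝ) ≠ 0 := NeZero.ne _
  have hlog := hasDerivAt_log_integral_exp_add_mul hE ((hR.const_inner y).const_mul (N : ℝ))
  have hG := hlog.const_mul (N : ℝ)⁻¹
  rw [integral_const_mul, inv_mul_cancel_left₀ hN] at hG
  simpa only [freeEnergy, energy_eq_add_space, gibbsMeasure] using hG

theorem deriv_deriv_freeEnergy_space (hE : Integrable (fun σ ↦ Real.exp (energy h ξ t x σ)) P)
    (hR : MemLp overlap ∞ P) (y : Matrix (Fin D) (Fin D) ℝ) :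
    deriv (deriv fun ε : ℝ ↦ freeEnergy P h ξ t (x + ε • y)) 0
      = N * Var[fun σ ↦ inner ℝ y (overlap σ); gibbsMeasure P h ξ t x] := by
  have hN : (N : ℝ) ≠ 0 := NeZero.ne _
  simp only [freeEnergy, energy_eq_add_space, deriv_const_mul_field',
    deriv_deriv_log_integral_exp_add_mul hE ((hR.const_inner y).const_mul (N : ℝ)),
    variance_const_mul, gibbsMeasure]
  field_simp

theorem eq_integral_overlap_of_hasDerivAt
    (hE : Integrable (fun σ ↦ Real.exp (energy h ξ t x σ)) P)
    (hP : ∀ᵐ σ ∂P, overlap σ ∈ psdUnitBall D) {g : Matrix (Fin D) (Fin D) ℝ} (hgsymm : g.IsSymm)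
    (hg : ∀ y : Matrix (Fin D) (Fin D) ℝ, y.IsSymm →
      HasDerivAt (fun ε : ℝ ↦ freeEnergy P h ξ t (x + ε • y)) ((g * yᵀ).trace) 0) :
    g = ∫ σ, overlap σ ∂gibbsMeasure P h ξ t x := by
  have := isProbabilityMeasure_gibbsMeasure hE
  have hQ := (gibbsMeasure_absolutelyContinuous (h := h) (ξ := ξ) t x).ae_le hP
  have hRQ := memLp_top_overlap hQ
  set m := ∫ σ, overlap σ ∂gibbsMeasure P h ξ t x with hm
  have hmsymm : m.IsSymm := isSymm_of_mem_psdUnitBall (integral_overlap_mem_psdUnitBall hE hP)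
  have hinner (y : Matrix (Fin D) (Fin D) ℝ) (hy : y.IsSymm) : inner ℝ (g - m) y = 0 := by
    have hderiv := (hg y hy).unique (hasDerivAt_freeEnergy_space hE (memLp_top_overlap hP) y)
    rw [integral_inner (hRQ.integrable le_top), ← hm, ← inner_eq_trace] at hderiv
    rw [inner_sub_left, hderiv, real_inner_comm, sub_self]
  exact sub_eq_zero.mp (inner_self_eq_zero.mp (hinner _ (hgsymm.sub hmsymm)))

theorem inv_mul_sum_deriv_deriv_freeEnergy
    (hE : Integrable (fun σ ↦ Real.exp (energy h ξ t x σ)) P)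
    (hP : ∀ᵐ σ ∂P, overlap σ ∈ psdUnitBall D) {ι : Type*} [Fintype ι]
    {e : ι → Matrix (Fin D) (Fin D) ℝ} (he : Orthonormal ℝ e)
    (hspan : ∀ z : Matrix (Fin D) (Fin D) ℝ, z.IsSymm → z ∈ Submodule.span ℝ (Set.range e)) :
    (N : ℝ)⁻¹ * ∑ i, deriv (deriv fun ε : ℝ ↦ freeEnergy P h ξ t (x + ε • e i)) 0
      = ∫ σ, ‖overlap σ - ∫ τ, overlap τ ∂gibbsMeasure P h ξ t x‖ ^ 2 ∂gibbsMeasure P h ξ t x := by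
  have hN : (N : ℝ) ≠ 0 := NeZero.ne _
  have := isProbabilityMeasure_gibbsMeasure hE
  have hQ := (gibbsMeasure_absolutelyContinuous (h := h) (ξ := ξ) t x).ae_le hP
  have hRQ := memLp_top_overlap hQ
  simp only [deriv_deriv_freeEnergy_space hE (memLp_top_overlap hP), ← Finset.mul_sum]
  rw [inv_mul_cancel_left₀ hN]
  refine sum_variance_inner_eq_integral_norm_sub_sq he (hRQ.mono_exponent le_top) ?_
  filter_upwards [hQ] with σ hσ
  exact hspan _ ((isSymm_of_mem_psdUnitBall hσ).sub
    (isSymm_of_mem_psdUnitBall (integral_overlap_mem_psdUnitBall hE hP)))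

end Derivatives

theorem freeEnergy_approx_hj_general [NeZero N] [NeZero P]
    (hsupp : ∀ᵐ σ ∂P, ∀ j : Fin N, ∑ i : Fin D, σ i j ^ 2 ≤ 1)
    (hh : Integrable (fun σ ↦ Real.exp (h σ)) P) (hconv : ConvexOn ℝ (psdUnitBall D) ξ) {L : ℝ}
    (hLip : ∀ a ∈ psdUnitBall D, ∀ b ∈ psdUnitBall D,
      |ξ a - ξ b| ≤ L * √(((a - b) * (a - b)ᵀ).trace))
    (t : ℝ) (x : Matrix (Fin D) (Fin D) ℝ)
    {g : Matrix (Fin D) (Fin D) ℝ} (hgsymm : g.IsSymm)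
    (hg : ∀ y : Matrix (Fin D) (Fin D) ℝ, y.IsSymm →
      HasDerivAt (fun ε : ℝ ↦ freeEnergy P h ξ t (x + ε • y)) ((g * yᵀ).trace) 0)
    {ι : Type*} [Fintype ι] [DecidableEq ι] {e : ι → Matrix (Fin D) (Fin D) ℝ}
    (horth : ∀ i j, (e i * (e j)ᵀ).trace = if i = j then (1 : ℝ) else 0)
    (hspan : ∀ z : Matrix (Fin D) (Fin D) ℝ, z.IsSymm → z ∈ Submodule.span ℝ (Set.range e)) :
    0 ≤ deriv (fun s ↦ freeEnergy P h ξ s x) t - ξ g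
    ∧ deriv (fun s ↦ freeEnergy P h ξ s x) t - ξ g
        ≤ L * √((N : ℝ)⁻¹
            * ∑ i, deriv (deriv (fun ε : ℝ ↦ freeEnergy P h ξ t (x + ε • e i))) 0) := by
  simp only [← frobenius_norm_eq_sqrt_trace] at hLip
  have hξLip : LipschitzOnWith L.toNNReal ξ (psdUnitBall D) := by
    simpa only [dist_eq_norm, Real.norm_eq_abs] using LipschitzOnWith.of_dist_le' hLip
  have hP : ∀ᵐ σ ∂P, overlap σ ∈ psdUnitBall D := hsupp.mono fun σ ↦ overlap_mem_psdUnitBall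
  have hR : MemLp overlap ∞ P := memLp_top_overlap hP
  have hξR : MemLp (fun σ ↦ ξ (overlap σ)) ∞ P := memLp_top_comp_of_lipschitzOnWith hξLip hR hP
  have hE := integrable_exp_energy hh hξR hR t x
  have hprob := isProbabilityMeasure_gibbsMeasure hE
  have hac : gibbsMeasure P h ξ t x ≪ P := gibbsMeasure_absolutelyContinuous t x
  have hRQ := memLp_top_of_absolutelyContinuous hac hR
  have hξQ := (memLp_top_of_absolutelyContinuous hac hξR).integrable le_top
  have hm := integral_overlap_mem_psdUnitBall hE hP
  rw [(hasDerivAt_freeEnergy_time hE hξR).deriv, eq_integral_overlap_of_hasDerivAt hE hP hgsymm hg,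
    inv_mul_sum_deriv_deriv_freeEnergy hE hP (orthonormal_iff_ite.mpr horth) hspan]
  exact ⟨sub_nonneg.mpr (hconv.map_integral_le hξLip.continuousOn isClosed_psdUnitBall
      (hac.ae_le hP) (hRQ.integrable le_top) hξQ),
    integral_comp_sub_le_mul_sqrt hLip (hRQ.mono_exponent le_top) hξQ (hac.ae_le hP) hm⟩

end FrobeniusInnerProduct

end Overlap

/-- Assume moreover that `ξ` is convex on PSD matrices and `L`-Lipschitz (for
the Frobenius norm) on the PSD matrices of Frobenius norm at most `1`. Then at
every `(t,x) ∈ ℝ × S^D`, writing `g ∈ S^D` for the gradient `∇_x G(t,x)` with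
respect to the Frobenius inner product (characterized by the directional
derivatives of `G(t,·)` at `x`), and `Δ_x G(t,x)` for the sum of second
derivatives of `G(t,·)` at `x` along any orthonormal basis `(e_i)` of `S^D`:
`0 ≤ ∂_t G(t,x) − ξ(∇_x G(t,x)) ≤ L (N⁻¹ Δ_x G(t,x))^{1/2}`. -/
theorem freeEnergy_approx_hj (D N : ℕ) (hD : 1 ≤ D) (hN : 1 ≤ N)
    (P : Measure (Matrix (Fin D) (Fin N) ℝ)) [IsProbabilityMeasure P]
    (hsupp : ∀ᵐ σ ∂P, ∀ j : Fin N, (∑ i : Fin D, (σ i j) ^ 2) ≤ 1)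
    (h : Matrix (Fin D) (Fin N) ℝ → ℝ) (hmeas : Measurable h)
    (hbdd : ∃ C : ℝ, ∀ σ, |h σ| ≤ C)
    (ξ : Matrix (Fin D) (Fin D) ℝ → ℝ) (hξ : Continuous ξ)
    (hconv : ConvexOn ℝ {a : Matrix (Fin D) (Fin D) ℝ | a.PosSemidef} ξ)
    (L : ℝ)
    (hLip : ∀ a b : Matrix (Fin D) (Fin D) ℝ, a.PosSemidef → b.PosSemidef →
      Real.sqrt ((a * aᵀ).trace) ≤ 1 → Real.sqrt ((b * bᵀ).trace) ≤ 1 →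
        |ξ a - ξ b| ≤ L * Real.sqrt (((a - b) * (a - b)ᵀ).trace))
    (t : ℝ) (x : Matrix (Fin D) (Fin D) ℝ) (hx : x.IsSymm)
    (g : Matrix (Fin D) (Fin D) ℝ) (hgsymm : g.IsSymm)
    (hg : ∀ y : Matrix (Fin D) (Fin D) ℝ, y.IsSymm →
      HasDerivAt (fun ε : ℝ => freeEnergy P h ξ t (x + ε • y)) ((g * yᵀ).trace) 0)
    (k : ℕ) (e : Fin k → Matrix (Fin D) (Fin D) ℝ)
    (he1 : ∀ i, (e i).IsSymm)
    (he2 : ∀ i j, ((e i) * (e j)ᵀ).trace = if i = j then (1 : ℝ) else 0)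
    (he3 : ∀ z : Matrix (Fin D) (Fin D) ℝ, z.IsSymm → z ∈ Submodule.span ℝ (Set.range e)) :
    0 ≤ deriv (fun s => freeEnergy P h ξ s x) t - ξ g
    ∧ deriv (fun s => freeEnergy P h ξ s x) t - ξ g
        ≤ L * Real.sqrt ((N : ℝ)⁻¹
            * ∑ i : Fin k, deriv (deriv (fun ε : ℝ => freeEnergy P h ξ t (x + ε • e i))) 0) := by
  have : NeZero N := ⟨by lia⟩
  obtain ⟨C, hC⟩ := hbdd
  have hh : Integrable (fun σ ↦ Real.exp (h σ)) P := by
    simpa using integrable_exp_add_of_memLp_top (U := 0) (by simp)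
      (memLp_top_of_bound hmeas.aestronglyMeasurable C (ae_of_all P hC))
  exact freeEnergy_approx_hj_general hsupp hh
    (hconv.subset (fun _ ha ↦ ha.1) convex_psdUnitBall)
    (fun a ha b hb ↦ hLip a b ha.1 hb.1 ha.2 hb.2) t x hgsymm hg he2 he3
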